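/- Local well-posedness of gIBq in the Wiener algebra FL¹: let k ≥ 2 be an integer. There exists c > 0, depending only on k, such that for every M > 0, every T with 0 < T ≤ 1 and T²·M^{k−1} ≤ c, and all v₀, v₁ ∈ L¹(ℝ) with ‖v₀‖_{L¹(ℝ)} + ‖v₁‖_{L¹(ℝ)} ≤ M, there exists a Fourier-side solution v : [0, T] → L¹(ℝ) of gIBq with nonlinearity u^k and data (v₀, v₁) satisfying sup_{0 ≤ t ≤ T} ‖v(t)‖_{L¹(ℝ)} ≤ 2M; moreover v is the unique such solution among continuous maps w : [0, T] → L¹(ℝ) with sup_{0 ≤ t ≤ T} ‖w(t)‖_{L¹(ℝ)} ≤ 2M. -/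

import Mathlib

open MeasureTheory Filter
open scoped ENNReal

noncomputable section

/-- The Japanese bracket weight `⟨ξ⟩^s = (1+ξ²)^(s/2)`. -/
def jbw (s ξ : ℝ) : ℝ := (1 + ξ ^ 2) ^ (s / 2)

/-- `λ(ξ) = |ξ|/⟨ξ⟩`. -/
def lam (ξ : ℝ) : ℝ := |ξ| / (1 + ξ ^ 2) ^ ((1 : ℝ) / 2)

/-- The multiplier `m(t,ξ) = sin(tλ(ξ))/λ(ξ)` for `ξ ≠ 0`, `m(t,0) = t`. -/
def mker (t ξ : ℝ) : ℝ := if ξ = 0 then t else Real.sin (t * lam ξ) / lam ξ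

/-- Fourier side linear propagator `Ŝ(t)(v₀,v₁)`. -/
def Shat (t : ℝ) (v₀ v₁ : ℝ → ℂ) (ξ : ℝ) : ℂ :=
  (Real.cos (t * lam ξ) : ℂ) * v₀ ξ + (mker t ξ : ℂ) * v₁ ξ

/-- Convolution of complex valued functions on `ℝ`. -/
def conv (f g : ℝ → ℂ) (ξ : ℝ) : ℂ := ∫ η, f η * g (ξ - η)

/-- Iterated convolution of a list of functions. -/
def convList : List (ℝ → ℂ) → ℝ → ℂ
  | [] => fun _ => 0
  | [f] => f
  | f :: g :: fs => conv f (convList (g :: fs))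

/-- Fourier side Duhamel operator `Î_k`. -/
def Ihat (k : ℕ) (w : Fin k → ℝ → ℝ → ℂ) (t ξ : ℝ) : ℂ :=
  ∫ t' in (0:ℝ)..t,
    ((Real.sin ((t - t') * lam ξ) * lam ξ : ℝ) : ℂ) * convList (List.ofFn fun i => w i t') ξ

/-- Continuity of a curve of functions with respect to the `L¹` norm, on `[0,T]`. -/
def ContinuousL1On (T : ℝ) (v : ℝ → ℝ → ℂ) : Prop :=
  ∀ t₀ ∈ Set.Icc (0 : ℝ) T,
    Tendsto (fun t => eLpNorm (fun ξ => v t ξ - v t₀ ξ) 1 volume)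
      (nhdsWithin t₀ (Set.Icc (0 : ℝ) T)) (nhds 0)

/-- Fourier-side solution of the generalized improved Boussinesq equation with
nonlinearity `u^k` and data `(v₀, v₁)` on `[0, T]`. -/
def IsGIBqSol (k : ℕ) (T : ℝ) (v₀ v₁ : ℝ → ℂ) (v : ℝ → ℝ → ℂ) : Prop :=
  (∀ t ∈ Set.Icc (0 : ℝ) T, Integrable (v t)) ∧
  ContinuousL1On T v ∧
  ∀ t ∈ Set.Icc (0 : ℝ) T,
    ∀ᵐ ξ ∂volume, v t ξ = Shat t v₀ v₁ ξ + Ihat k (fun _ => v) t ξ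

/-- Picard iterates `Ξ̂_j` for gIBq on the Fourier side. -/
def Xi (k : ℕ) (v₀ v₁ : ℝ → ℂ) : ℕ → ℝ → ℝ → ℂ
  | 0 => fun t => Shat t v₀ v₁
  | (j+1) => fun t ξ =>
      ∑ p ∈ (Finset.Nat.antidiagonalTuple k j).attach,
        Ihat k (fun i => Xi k v₀ v₁ (p.1 i)) t ξ
decreasing_by
  have hsum := Finset.Nat.mem_antidiagonalTuple.mp p.2
  have hle : p.1 i ≤ j := by
    calc p.1 i ≤ ∑ i', p.1 i' :=
          Finset.single_le_sum (fun _ _ => Nat.zero_le _) (Finset.mem_univ i)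
      _ = j := hsum
  omega

/-- The `FL^{s,p}` norm on the Fourier side: `‖⟨ξ⟩^s w‖_{L^p}`. -/
def FLnorm (s : ℝ) (p : ℝ≥0∞) (w : ℝ → ℂ) : ℝ≥0∞ :=
  eLpNorm (fun ξ => jbw s ξ * ‖w ξ‖) p volume

end

/-!
Convolution makes `L¹(ℝ)` a Banach algebra, and the three symbols `cos(tλ)`, `m(t, ·)` and
`sin(tλ)λ` are bounded and Lipschitz in `t` uniformly in `ξ`, so they act on `L¹(ℝ)` as
norm-continuous families of operators. Hence gIBq is a Duhamel equation in `C([0, T]; L¹(ℝ))` with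
a locally Lipschitz nonlinearity. Since `|m(t, ξ)| ≤ |t|` and `|sin((t - s)λ)λ| ≤ |t - s|`, for
`T ≤ 1` the linear part has norm at most `M` and the nonlinear part has Lipschitz constant at most
`T² k (2M)^(k-1)` on the ball of radius `2M`. For `c = 1 / (k 2^k)` this constant is at most `1/2`,
and the contraction principle applies.

The equation satisfied by a fixed point involves a Bochner integral in `L¹(ℝ)`, whereas `Ihat` is
an integral for each fixed `ξ`. The two agree almost everywhere by the Fubini theorem, once the
curve in `L¹(ℝ)` is represented by a jointly measurable function.
-/

open Set Function Topology

section LpCurves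

variable {α β E : Type*} [MeasurableSpace α] [MeasurableSpace β] {μ : Measure β}
  [NormedAddCommGroup E]

theorem exists_seq_forall_exists_measurable_dist_lt {f : α → E} (hf : StronglyMeasurable f) :
    ∃ d : ℕ → E, ∀ ε > 0, ∃ N : α → ℕ, Measurable N ∧ ∀ x, dist (d (N x)) (f x) < ε := by
  classical
  obtain ⟨s, hs, hfs⟩ := hf.isSeparable_range
  obtain ⟨d, hd⟩ := (hs.insert 0).exists_eq_range (insert_nonempty 0 s)
  refine ⟨d, fun ε hε => ?_⟩
  have exists_index (x : α) : ∃ n, dist (d n) (f x) < ε := by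
    obtain ⟨y, hy, hxy⟩ := Metric.mem_closure_iff.1 (hfs (mem_range_self x)) ε hε
    obtain ⟨n, rfl⟩ : y ∈ range d := hd ▸ mem_insert_of_mem 0 hy
    exact ⟨n, by rwa [dist_comm]⟩
  refine ⟨fun x => Nat.find (exists_index x), measurable_find exists_index fun n => ?_,
    fun x => Nat.find_spec (exists_index x)⟩
  exact (stronglyMeasurable_const.dist hf).measurable measurableSet_Iio

variable {p : ℝ≥0∞} [Fact (1 ≤ p)]

theorem ae_tendsto_of_tsum_edist_ne_top {f : ℕ → Lp E p μ} {g : Lp E p μ}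
    (h : ∑' n, edist (f n) g ≠ ∞) : ∀ᵐ y ∂μ, Tendsto (fun n => f n y) atTop (𝓝 (g y)) := by
  simp only [Lp.edist_def] at h
  filter_upwards [summable_norm_of_tsum_eLpNorm_ne_top Fact.out
    (fun n => (Lp.aestronglyMeasurable (f n)).sub (Lp.aestronglyMeasurable g)) h] with y hy
  exact tendsto_iff_norm_sub_tendsto_zero.2 hy.tendsto_atTop_zero

theorem exists_stronglyMeasurable_uncurry_ae_eq [CompleteSpace E] {G : α → Lp E p μ}
    (hG : StronglyMeasurable G) :
    ∃ g : α → β → E, StronglyMeasurable (uncurry g) ∧ ∀ x, g x =ᵐ[μ] G x := by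
  -- For countably-valued curves the claim is clear. Approximating `G` by such curves within `2⁻ⁿ`
  -- makes the errors summable, so the representatives converge almost everywhere.
  obtain ⟨d, hd⟩ := exists_seq_forall_exists_measurable_dist_lt hG
  choose N hN_meas hN_dist using fun n : ℕ => hd (2⁻¹ ^ n) (by positivity)
  have hd_meas : StronglyMeasurable (uncurry fun i => ⇑(d i)) :=
    stronglyMeasurable_uncurry_of_continuous_of_stronglyMeasurable
      (fun _ => continuous_of_discreteTopology) fun i => Lp.stronglyMeasurable (d i)
  refine ⟨fun x y => limUnder atTop fun n => d (N n x) y, ?_, fun x => ?_⟩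
  · exact StronglyMeasurable.limUnder fun n =>
      hd_meas.comp_measurable (((hN_meas n).comp measurable_fst).prodMk measurable_snd)
  · have geometric_ne_top : ∑' n : ℕ, ENNReal.ofReal (2⁻¹ ^ n) ≠ ∞ :=
      (summable_geometric_of_lt_one (by norm_num) (by norm_num)).tsum_ofReal_ne_top
    have summable_edist : ∑' n, edist (d (N n x)) (G x) ≠ ∞ :=
      ne_top_of_le_ne_top geometric_ne_top <| ENNReal.tsum_le_tsum fun n =>
        (edist_dist _ _).trans_le (ENNReal.ofReal_le_ofReal (hN_dist n x).le)
    filter_upwards [ae_tendsto_of_tsum_edist_ne_top summable_edist] with y hy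
    exact hy.limUnder_eq

variable {ν : Measure α}

theorem integrable_uncurry_of_ae_eq [SFinite μ] {G : α → β →₁[μ] E} {g : α → β → E}
    (hG : Integrable G ν) (hg : AEStronglyMeasurable (uncurry g) (ν.prod μ))
    (h : ∀ᵐ x ∂ν, g x =ᵐ[μ] G x) :
    Integrable (uncurry g) (ν.prod μ) := by
  refine (integrable_prod_iff hg).2 ⟨?_, hG.norm.congr ?_⟩
  · filter_upwards [h] with x hx
    exact (L1.integrable_coeFn (G x)).congr hx.symm
  · filter_upwards [h] with x hx
    rw [L1.norm_eq_integral_norm]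
    exact integral_congr_ae (hx.symm.fun_comp norm)

variable [NormedSpace ℝ E] [CompleteSpace E]

theorem setIntegral_integral_Lp {G : α → β →₁[μ] E} (hG : Integrable G ν)
    (s : Set β) : ∫ y in s, (∫ x, G x ∂ν : β →₁[μ] E) y ∂μ = ∫ x, ∫ y in s, G x y ∂μ ∂ν := by
  let setIntegralCLM : (β →₁[μ] E) →L[ℝ] E := L1.integralCLM ∘L LpToLpRestrictCLM β E ℝ μ 1 s
  have apply_eq (f : β →₁[μ] E) : setIntegralCLM f = ∫ y in s, f y ∂μ := by
    simp only [setIntegralCLM, ContinuousLinearMap.comp_apply]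
    rw [← L1.integral_eq, L1.integral_eq_integral]
    exact integral_congr_ae (LpToLpRestrictCLM_coeFn ℝ s f)
  simpa only [apply_eq] using (setIntegralCLM.integral_comp_comm hG).symm

theorem coeFn_integral_ae_eq [SFinite μ] [SFinite ν] {G : α → β →₁[μ] E} {g : α → β → E}
    (hG : Integrable G ν) (hg : AEStronglyMeasurable (uncurry g) (ν.prod μ))
    (h : ∀ᵐ x ∂ν, g x =ᵐ[μ] G x) :
    (∫ x, G x ∂ν : β →₁[μ] E) =ᵐ[μ] fun y => ∫ x, g x y ∂ν := by
  have hint := integrable_uncurry_of_ae_eq hG hg h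
  refine (L1.integrable_coeFn _).ae_eq_of_forall_setIntegral_eq _ _ hint.integral_prod_right
    fun s _ _ => ?_
  calc ∫ y in s, (∫ x, G x ∂ν : β →₁[μ] E) y ∂μ = ∫ x, ∫ y in s, G x y ∂μ ∂ν :=
        setIntegral_integral_Lp hG s
    _ = ∫ x, ∫ y in s, g x y ∂μ ∂ν := by
        refine integral_congr_ae ?_
        filter_upwards [h] with x hx
        exact integral_congr_ae (ae_restrict_of_ae hx.symm)
    _ = ∫ y in s, ∫ x, g x y ∂ν ∂μ :=
        integral_integral_swap <| hint.mono_measure <|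
          Measure.prod_mono le_rfl Measure.restrict_le_self

end LpCurves

section Duhamel

theorem existsUnique_mem_isFixedPt {α : Type*} [MetricSpace α] {K : NNReal} {f : α → α}
    {s : Set α} (hs_complete : IsComplete s) (hs_nonempty : s.Nonempty) (hsf : MapsTo f s s)
    (hf : ContractingWith K (hsf.restrict f s s)) : ∃! x, x ∈ s ∧ IsFixedPt f x := by
  obtain ⟨x₀, hx₀⟩ := hs_nonempty
  obtain ⟨x, hxs, hx, -⟩ := hf.exists_fixedPoint' hs_complete hsf hx₀ (edist_ne_top _ _)
  refine ⟨x, ⟨hxs, hx⟩, fun y ⟨hys, hy⟩ => ?_⟩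
  exact congrArg Subtype.val <|
    hf.fixedPoint_unique' (x := ⟨y, hys⟩) (y := ⟨x, hxs⟩) (Subtype.ext hy) (Subtype.ext hx)

variable {X : Type*} [NormedAddCommGroup X] [NormedSpace ℝ X] {T : ℝ}

theorem continuous_duhamel_integrand (hT : 0 ≤ T) (K : C(ℝ, X →L[ℝ] X)) (N : C(X, X))
    (e : C(Icc 0 T, X)) :
    Continuous (uncurry fun t s : ℝ => K (t - s) (N (e (projIcc 0 T hT s)))) := by
  have : Continuous (projIcc 0 T hT) := continuous_projIcc
  fun_prop

/-- The right-hand side `t ↦ S(t) + ∫₀ᵗ K(t - s) N(e(s)) ds` of the Duhamel formula, acting on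
curves `e` in `X` parametrized by `[0, T]`. The projection `projIcc` only serves to make sense of
`e(s)` for real `s`. -/
noncomputable def duhamelMap (hT : 0 ≤ T) (S : C(ℝ, X)) (K : C(ℝ, X →L[ℝ] X)) (N : C(X, X))
    (e : C(Icc 0 T, X)) : C(Icc 0 T, X) where
  toFun t := S t + ∫ s in (0 : ℝ)..t, K (t - s) (N (e (projIcc 0 T hT s)))
  continuous_toFun :=
    (S.continuous.add <|
      intervalIntegral.continuous_parametric_intervalIntegral_of_continuous
        (continuous_duhamel_integrand hT K N e) continuous_id).comp continuous_subtype_val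

variable {hT : 0 ≤ T} {S : C(ℝ, X)} {K : C(ℝ, X →L[ℝ] X)} {N : C(X, X)} {M κ R : ℝ} {L : NNReal}

theorem norm_duhamelMap_sub_le (hκ : 0 ≤ κ) (hK : ∀ r ∈ Icc 0 T, ‖K r‖ ≤ κ)
    (hN : LipschitzOnWith L N (Metric.closedBall 0 R)) {e e' : C(Icc 0 T, X)} (he : ‖e‖ ≤ R)
    (he' : ‖e'‖ ≤ R) :
    ‖duhamelMap hT S K N e - duhamelMap hT S K N e'‖ ≤ T * (κ * L) * ‖e - e'‖ := by
  refine (ContinuousMap.norm_le _ (by positivity)).2 fun t => ?_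
  have integrand_sub_le (s : ℝ) (hs : s ∈ uIoc 0 (t : ℝ)) :
      ‖K (t - s) (N (e (projIcc 0 T hT s))) - K (t - s) (N (e' (projIcc 0 T hT s)))‖ ≤
        κ * (L * ‖e - e'‖) := by
    rw [uIoc_of_le t.2.1] at hs
    rw [← map_sub]
    have hts : (t : ℝ) - s ∈ Icc 0 T := ⟨by linarith [hs.2], by linarith [hs.1, t.2.2]⟩
    refine (K (t - s)).le_of_opNorm_le_of_le (hK _ hts) ?_
    refine (hN.norm_sub_le ?_ ?_).trans ?_
    · exact mem_closedBall_zero_iff.2 ((e.norm_coe_le_norm _).trans he)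
    · exact mem_closedBall_zero_iff.2 ((e'.norm_coe_le_norm _).trans he')
    · exact mul_le_mul_of_nonneg_left ((e - e').norm_coe_le_norm _) L.2
  have intervalIntegrable (u : C(Icc 0 T, X)) : IntervalIntegrable
      (fun s => K (t - s) (N (u (projIcc 0 T hT s)))) volume 0 t :=
    ((continuous_duhamel_integrand hT K N u).uncurry_left (t : ℝ)).intervalIntegrable _ _
  calc ‖(duhamelMap hT S K N e - duhamelMap hT S K N e') t‖
      = ‖∫ s in (0 : ℝ)..t,
          (K (t - s) (N (e (projIcc 0 T hT s))) - K (t - s) (N (e' (projIcc 0 T hT s))))‖ := by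
        rw [intervalIntegral.integral_sub (intervalIntegrable e) (intervalIntegrable e')]
        simp only [duhamelMap, ContinuousMap.sub_apply, ContinuousMap.coe_mk,
          add_sub_add_left_eq_sub]
    _ ≤ κ * (L * ‖e - e'‖) * |(t : ℝ) - 0| :=
        intervalIntegral.norm_integral_le_of_norm_le_const integrand_sub_le
    _ ≤ κ * (L * ‖e - e'‖) * T := by
        rw [sub_zero, abs_of_nonneg t.2.1]
        gcongr
        exact t.2.2
    _ = T * (κ * L) * ‖e - e'‖ := by ring

theorem existsUnique_duhamelMap_eq [CompleteSpace X] (hκ : 0 ≤ κ) (hR : 0 ≤ R)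
    (hS : ∀ t ∈ Icc 0 T, ‖S t‖ ≤ M) (hK : ∀ r ∈ Icc 0 T, ‖K r‖ ≤ κ) (hN₀ : N 0 = 0)
    (hN : LipschitzOnWith L N (Metric.closedBall 0 R)) (hMR : M + T * (κ * L) * R ≤ R)
    (hlt : T * (κ * L) < 1) : ∃! e, ‖e‖ ≤ R ∧ duhamelMap hT S K N e = e := by
  have norm_duhamelMap_zero_le : ‖duhamelMap hT S K N 0‖ ≤ M := by
    have hM : 0 ≤ M := (norm_nonneg _).trans (hS 0 ⟨le_rfl, hT⟩)
    refine (ContinuousMap.norm_le _ hM).2 fun t => ?_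
    simpa only [duhamelMap, ContinuousMap.coe_mk, ContinuousMap.zero_apply, hN₀, map_zero,
      intervalIntegral.integral_zero, add_zero] using hS t t.2
  have mapsTo : MapsTo (duhamelMap hT S K N) {e | ‖e‖ ≤ R} {e | ‖e‖ ≤ R} := fun e he =>
    calc ‖duhamelMap hT S K N e‖
        ≤ ‖duhamelMap hT S K N 0‖ + ‖duhamelMap hT S K N e - duhamelMap hT S K N 0‖ :=
          norm_le_norm_add_norm_sub' _ _
      _ ≤ M + T * (κ * L) * R := by
          gcongr
          refine (norm_duhamelMap_sub_le hκ hK hN he (by simpa using hR)).trans ?_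
          rw [sub_zero]
          gcongr
          exact he
      _ ≤ R := hMR
  have contracting : ContractingWith ⟨T * (κ * L), by positivity⟩ (mapsTo.restrict _ _ _) :=
    ⟨by exact_mod_cast hlt, LipschitzWith.of_dist_le_mul fun e e' => by
      rw [Subtype.dist_eq, Subtype.dist_eq, dist_eq_norm, dist_eq_norm]
      exact norm_duhamelMap_sub_le hκ hK hN e.2 e'.2⟩
  exact existsUnique_mem_isFixedPt (isClosed_le continuous_norm continuous_const).isComplete
    ⟨0, norm_zero.trans_le hR⟩ mapsTo contracting

end Duhamel

section BilinearPowers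

variable {𝕜 X : Type*} [NontriviallyNormedField 𝕜] [NormedAddCommGroup X] [NormedSpace 𝕜 X]

/-- The iterated product `f · (f · (⋯ · f))` with `n + 1` factors, for the (not necessarily
associative) product on `X` given by a bounded bilinear map `B`. -/
def bilinPow (B : X →L[𝕜] X →L[𝕜] X) : ℕ → X → X
  | 0, f => f
  | n + 1, f => B f (bilinPow B n f)

variable {B : X →L[𝕜] X →L[𝕜] X}

theorem continuous_bilinPow (B : X →L[𝕜] X →L[𝕜] X) (n : ℕ) : Continuous (bilinPow B n) := by
  induction n with
  | zero => exact continuous_id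
  | succ n ih =>
    change Continuous fun f => B f (bilinPow B n f)
    fun_prop

theorem bilinPow_succ_zero (B : X →L[𝕜] X →L[𝕜] X) (n : ℕ) : bilinPow B (n + 1) 0 = 0 := by
  simp only [bilinPow, map_zero, zero_apply]

theorem norm_bilinPow_le {b R : ℝ} (hB : ‖B‖ ≤ b) {f : X} (hf : ‖f‖ ≤ R) (n : ℕ) :
    ‖bilinPow B n f‖ ≤ (b * R) ^ n * R := by
  induction n with
  | zero => simpa only [bilinPow, pow_zero, one_mul] using hf
  | succ n ih =>
    calc ‖B f (bilinPow B n f)‖ ≤ b * R * ((b * R) ^ n * R) :=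
          (B f).le_of_opNorm_le_of_le (B.le_of_opNorm_le_of_le hB hf) ih
      _ = (b * R) ^ (n + 1) * R := by ring

theorem norm_bilinPow_sub_le {b R : ℝ} (hB : ‖B‖ ≤ b) {f g : X} (hf : ‖f‖ ≤ R) (hg : ‖g‖ ≤ R)
    (n : ℕ) : ‖bilinPow B n f - bilinPow B n g‖ ≤ (n + 1) * (b * R) ^ n * ‖f - g‖ := by
  induction n with
  | zero => simp only [bilinPow, Nat.cast_zero, zero_add, pow_zero, mul_one, one_mul, le_refl]
  | succ n ih =>
    calc ‖B f (bilinPow B n f) - B g (bilinPow B n g)‖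
        = ‖B f (bilinPow B n f - bilinPow B n g) + B (f - g) (bilinPow B n g)‖ := by
          simp only [map_sub, sub_apply, sub_add_sub_cancel]
      _ ≤ b * R * ((n + 1) * (b * R) ^ n * ‖f - g‖) + b * ‖f - g‖ * ((b * R) ^ n * R) :=
          norm_add_le_of_le
            ((B f).le_of_opNorm_le_of_le (B.le_of_opNorm_le_of_le hB hf) ih)
            ((B (f - g)).le_of_opNorm_le_of_le (B.le_of_opNorm_le hB _) (norm_bilinPow_le hB hg n))
      _ = ((n + 1 : ℕ) + 1) * (b * R) ^ (n + 1) * ‖f - g‖ := by push_cast; ring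

end BilinearPowers

section ConvolutionL1

variable {𝕜 G E E' F : Type*} [NontriviallyNormedField 𝕜] [NormedAddCommGroup E]
  [NormedAddCommGroup E'] [NormedAddCommGroup F] [NormedSpace 𝕜 E] [NormedSpace 𝕜 E']
  [NormedSpace 𝕜 F] [NormedSpace ℝ F] [AddGroup G] [MeasurableSpace G] [MeasurableAdd₂ G]
  [MeasurableNeg G] {μ : Measure G} [SFinite μ] [μ.IsAddRightInvariant]

theorem integral_norm_convolution_le (L : E →L[𝕜] E' →L[𝕜] F) {f : G → E} {g : G → E'}
    (hf : Integrable f μ) (hg : Integrable g μ) :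
    ∫ x, ‖convolution f g L μ x‖ ∂μ ≤ ‖L‖ * (∫ x, ‖f x‖ ∂μ) * ∫ x, ‖g x‖ ∂μ := by
  let normMul : ℝ →L[ℝ] ℝ →L[ℝ] ℝ := ‖L‖ • ContinuousLinearMap.mul ℝ ℝ
  have normMul_apply (a b : ℝ) : normMul a b = ‖L‖ * a * b := by
    simp [normMul, mul_assoc]
  calc ∫ x, ‖convolution f g L μ x‖ ∂μ
      ≤ ∫ x, convolution (‖f ·‖) (‖g ·‖) normMul μ x ∂μ := by
        refine integral_mono_ae (hf.integrable_convolution L hg).norm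
          (hf.norm.integrable_convolution normMul hg.norm) ?_
        filter_upwards [hf.norm.ae_convolution_exists normMul hg.norm] with x hx
        refine norm_integral_le_of_norm_le hx (ae_of_all _ fun y => ?_)
        exact (L.le_opNorm₂ _ _).trans_eq (normMul_apply _ _).symm
    _ = ‖L‖ * (∫ x, ‖f x‖ ∂μ) * ∫ x, ‖g x‖ ∂μ := by
        rw [integral_convolution normMul hf.norm hg.norm, normMul_apply]

theorem integrable_convolution_coeFn (L : E →L[𝕜] E' →L[𝕜] F) (f : G →₁[μ] E) (g : G →₁[μ] E') :
    Integrable (convolution f g L μ) μ :=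
  (L1.integrable_coeFn f).integrable_convolution L (L1.integrable_coeFn g)

theorem norm_toL1_convolution_le (L : E →L[𝕜] E' →L[𝕜] F) (f : G →₁[μ] E) (g : G →₁[μ] E') :
    ‖(integrable_convolution_coeFn L f g).toL1 _‖ ≤ ‖L‖ * ‖f‖ * ‖g‖ := by
  rw [L1.norm_of_fun_eq_integral_norm, L1.norm_eq_integral_norm, L1.norm_eq_integral_norm]
  exact integral_norm_convolution_le L (L1.integrable_coeFn f) (L1.integrable_coeFn g)

variable [SMulCommClass ℝ 𝕜 F]

/-- Convolution with respect to a bounded bilinear map `L`, as a bounded bilinear map on `L¹`. -/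
noncomputable def convolutionL1 (L : E →L[𝕜] E' →L[𝕜] F) (μ : Measure G) [SFinite μ]
    [μ.IsAddRightInvariant] : (G →₁[μ] E) →L[𝕜] (G →₁[μ] E') →L[𝕜] G →₁[μ] F :=
  LinearMap.mkContinuous₂
    (LinearMap.mk₂ 𝕜 (fun f g => (integrable_convolution_coeFn L f g).toL1 _)
      (fun f f' g => by
        rw [← Integrable.toL1_add, Integrable.toL1_eq_toL1_iff,
          convolution_congr L (Lp.coeFn_add f f') .rfl]
        filter_upwards [(L1.integrable_coeFn f).ae_convolution_exists L (L1.integrable_coeFn g),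
          (L1.integrable_coeFn f').ae_convolution_exists L (L1.integrable_coeFn g)] with x hf hf'
        exact hf.add_distrib hf')
      (fun c f g => by
        rw [← Integrable.toL1_smul, Integrable.toL1_eq_toL1_iff,
          convolution_congr L (Lp.coeFn_smul c f) .rfl, smul_convolution]
        rfl)
      (fun f g g' => by
        rw [← Integrable.toL1_add, Integrable.toL1_eq_toL1_iff,
          convolution_congr L .rfl (Lp.coeFn_add g g')]
        filter_upwards [(L1.integrable_coeFn f).ae_convolution_exists L (L1.integrable_coeFn g),
          (L1.integrable_coeFn f).ae_convolution_exists L (L1.integrable_coeFn g')] with x hg hg'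
        exact hg.distrib_add hg')
      (fun c f g => by
        rw [← Integrable.toL1_smul, Integrable.toL1_eq_toL1_iff,
          convolution_congr L .rfl (Lp.coeFn_smul c g), convolution_smul]
        rfl))
    ‖L‖ (norm_toL1_convolution_le L)

theorem norm_convolutionL1_le (L : E →L[𝕜] E' →L[𝕜] F) : ‖convolutionL1 L μ‖ ≤ ‖L‖ :=
  LinearMap.mkContinuous₂_norm_le _ (norm_nonneg L) (norm_toL1_convolution_le L)

theorem coeFn_convolutionL1 (L : E →L[𝕜] E' →L[𝕜] F) (f : G →₁[μ] E) (g : G →₁[μ] E') :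
    convolutionL1 L μ f g =ᵐ[μ] convolution f g L μ :=
  (integrable_convolution_coeFn L f g).coeFn_toL1

end ConvolutionL1

section Multipliers

variable {β E : Type*} [MeasurableSpace β] {μ : Measure β} [NormedAddCommGroup E]

theorem norm_toLp_top_le {f : β → E} (hf : MemLp f ∞ μ) {C : ℝ} (hC : 0 ≤ C)
    (h : ∀ y, ‖f y‖ ≤ C) : ‖hf.toLp f‖ ≤ C := by
  rw [Lp.norm_toLp, eLpNorm_exponent_top]
  exact ENNReal.toReal_le_of_le_ofReal hC (eLpNormEssSup_le_of_ae_bound (ae_of_all _ h))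

/-- A one-parameter family of bounded real multipliers on `β`, Lipschitz in the
parameter with constant `1`, uniformly on `β`. -/
structure IsLipschitzSymbol (φ : ℝ → β → ℝ) : Prop where
  measurable (t : ℝ) : Measurable (φ t)
  bounded (t : ℝ) : ∃ C, ∀ y, |φ t y| ≤ C
  abs_sub_le (t s : ℝ) (y : β) : |φ t y - φ s y| ≤ |t - s|

variable [NormedSpace ℝ E] {φ : ℝ → β → ℝ}

theorem IsLipschitzSymbol.memLp_top (hφ : IsLipschitzSymbol φ) (μ : Measure β) (t : ℝ) :
    MemLp (φ t) ∞ μ :=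
  let ⟨C, hC⟩ := hφ.bounded t
  memLp_top_of_bound (hφ.measurable t).aestronglyMeasurable C (ae_of_all _ hC)

theorem IsLipschitzSymbol.lipschitzWith_toLp (hφ : IsLipschitzSymbol φ) (μ : Measure β) :
    LipschitzWith 1 fun t => (hφ.memLp_top μ t).toLp (φ t) :=
  LipschitzWith.of_dist_le_mul fun t s => by
    rw [dist_eq_norm, ← MemLp.toLp_sub, NNReal.coe_one, one_mul, Real.dist_eq]
    exact norm_toLp_top_le _ (abs_nonneg _) (hφ.abs_sub_le t s)

/-- The multiplication operators `f ↦ φ(t) f` on `L¹`, as a curve that is continuous in operator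
norm. -/
noncomputable def multiplierCurve (hφ : IsLipschitzSymbol φ) (μ : Measure β) (E : Type*)
    [NormedAddCommGroup E] [NormedSpace ℝ E] : C(ℝ, (β →₁[μ] E) →L[ℝ] (β →₁[μ] E)) where
  toFun t := (ContinuousLinearMap.lsmul ℝ ℝ).holderL μ ∞ 1 1 ((hφ.memLp_top μ t).toLp (φ t))
  continuous_toFun :=
    (ContinuousLinearMap.continuous _).comp (hφ.lipschitzWith_toLp μ).continuous

theorem coeFn_multiplierCurve (hφ : IsLipschitzSymbol φ) (t : ℝ) (f : β →₁[μ] E) :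
    multiplierCurve hφ μ E t f =ᵐ[μ] fun y => φ t y • f y := by
  filter_upwards [(ContinuousLinearMap.lsmul ℝ ℝ).coeFn_holder (r := 1)
    ((hφ.memLp_top μ t).toLp (φ t)) f, (hφ.memLp_top μ t).coeFn_toLp] with y hmul hsymbol
  rwa [hsymbol] at hmul

theorem norm_multiplierCurve_le (hφ : IsLipschitzSymbol φ) {t C : ℝ} (hC : 0 ≤ C)
    (h : ∀ y, |φ t y| ≤ C) : ‖multiplierCurve hφ μ E t‖ ≤ C := by
  refine ContinuousLinearMap.opNorm_le_bound _ hC fun f => ?_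
  calc ‖multiplierCurve hφ μ E t f‖
      ≤ ‖(ContinuousLinearMap.lsmul ℝ ℝ : ℝ →L[ℝ] E →L[ℝ] E)‖ *
          ‖(hφ.memLp_top μ t).toLp (φ t)‖ * ‖f‖ :=
        ContinuousLinearMap.norm_holder_apply_apply_le _ _ _
    _ ≤ 1 * C * ‖f‖ := by
        gcongr
        · exact ContinuousLinearMap.opNorm_lsmul_le
        · exact norm_toLp_top_le _ hC h
    _ = C * ‖f‖ := by rw [one_mul]

end Multipliers

section Symbols

theorem lam_nonneg (ξ : ℝ) : 0 ≤ lam ξ := by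
  unfold lam
  positivity

theorem lam_pos {ξ : ℝ} (hξ : ξ ≠ 0) : 0 < lam ξ :=
  div_pos (abs_pos.2 hξ) (by positivity)

theorem lam_le_one (ξ : ℝ) : lam ξ ≤ 1 := by
  rw [lam, ← Real.sqrt_eq_rpow]
  exact div_le_one_of_le₀ (Real.abs_le_sqrt (by linarith)) (Real.sqrt_nonneg _)

@[fun_prop]
theorem measurable_lam : Measurable lam := by
  unfold lam
  fun_prop

theorem abs_mul_lam_sub_mul_lam (t s ξ : ℝ) : |t * lam ξ - s * lam ξ| = |t - s| * lam ξ := by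
  rw [← sub_mul, abs_mul, abs_of_nonneg (lam_nonneg ξ)]

theorem abs_mul_lam_sub_mul_lam_le (t s ξ : ℝ) : |t * lam ξ - s * lam ξ| ≤ |t - s| :=
  (abs_mul_lam_sub_mul_lam t s ξ).trans_le (mul_le_of_le_one_right (abs_nonneg _) (lam_le_one ξ))

theorem abs_mker_sub_mker_le (t s ξ : ℝ) : |mker t ξ - mker s ξ| ≤ |t - s| := by
  unfold mker
  split_ifs with hξ
  · exact le_rfl
  · rw [← sub_div, abs_div, abs_of_pos (lam_pos hξ), div_le_iff₀ (lam_pos hξ),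
      ← abs_mul_lam_sub_mul_lam]
    exact Real.abs_sin_sub_sin_le _ _

theorem abs_mker_le (t ξ : ℝ) : |mker t ξ| ≤ |t| := by
  have mker_zero : mker 0 ξ = 0 := by
    simp only [mker, zero_mul, Real.sin_zero, zero_div, ite_self]
  simpa only [mker_zero, sub_zero] using abs_mker_sub_mker_le t 0 ξ

theorem abs_sin_mul_lam_le (t ξ : ℝ) : |Real.sin (t * lam ξ) * lam ξ| ≤ |t| := by
  rw [abs_mul, abs_of_nonneg (lam_nonneg ξ)]
  calc |Real.sin (t * lam ξ)| * lam ξ ≤ |t * lam ξ| * 1 :=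
        mul_le_mul Real.abs_sin_le_abs (lam_le_one ξ) (lam_nonneg ξ) (abs_nonneg _)
    _ ≤ |t| := by simpa using abs_mul_lam_sub_mul_lam_le t 0 ξ

theorem isLipschitzSymbol_cos : IsLipschitzSymbol fun t ξ => Real.cos (t * lam ξ) where
  measurable t := by fun_prop
  bounded t := ⟨1, fun ξ => Real.abs_cos_le_one _⟩
  abs_sub_le t s ξ := (Real.abs_cos_sub_cos_le _ _).trans (abs_mul_lam_sub_mul_lam_le t s ξ)

theorem isLipschitzSymbol_mker : IsLipschitzSymbol mker where
  measurable t := Measurable.ite (measurableSet_singleton 0) measurable_const (by fun_prop)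
  bounded t := ⟨|t|, abs_mker_le t⟩
  abs_sub_le := abs_mker_sub_mker_le

theorem isLipschitzSymbol_sin_mul_lam :
    IsLipschitzSymbol fun t ξ => Real.sin (t * lam ξ) * lam ξ where
  measurable t := by fun_prop
  bounded t := ⟨|t|, abs_sin_mul_lam_le t⟩
  abs_sub_le t s ξ := by
    rw [← sub_mul, abs_mul, abs_of_nonneg (lam_nonneg ξ)]
    exact (mul_le_of_le_one_right (abs_nonneg _) (lam_le_one ξ)).trans <|
      (Real.abs_sin_sub_sin_le _ _).trans (abs_mul_lam_sub_mul_lam_le t s ξ)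

end Symbols

section ConvolutionPowers

theorem conv_eq_convolution (f g : ℝ → ℂ) :
    conv f g = convolution f g (ContinuousLinearMap.mul ℂ ℂ) volume := rfl

theorem conv_congr {f f' g g' : ℝ → ℂ} (hf : f =ᵐ[volume] f') (hg : g =ᵐ[volume] g') :
    conv f g = conv f' g' :=
  convolution_congr (ContinuousLinearMap.mul ℂ ℂ) hf hg

theorem convList_replicate_succ_succ (n : ℕ) (f : ℝ → ℂ) :
    convList (List.replicate (n + 2) f) = conv f (convList (List.replicate (n + 1) f)) := rfl

theorem convList_replicate_ae_eq {f g : ℝ → ℂ} (h : f =ᵐ[volume] g) (n : ℕ) :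
    convList (List.replicate (n + 1) f) =ᵐ[volume] convList (List.replicate (n + 1) g) := by
  induction n with
  | zero => exact h
  | succ n ih =>
    rw [convList_replicate_succ_succ, convList_replicate_succ_succ, conv_congr h ih]

theorem convList_replicate_congr_ae {f g : ℝ → ℂ} (h : f =ᵐ[volume] g) (n : ℕ) :
    convList (List.replicate (n + 2) f) = convList (List.replicate (n + 2) g) :=
  conv_congr h (convList_replicate_ae_eq h n)

theorem stronglyMeasurable_uncurry_convList_replicate {α : Type*} [MeasurableSpace α]
    {W : α → ℝ → ℂ} (hW : StronglyMeasurable (uncurry W)) (n : ℕ) :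
    StronglyMeasurable (uncurry fun t => convList (List.replicate (n + 1) (W t))) := by
  induction n with
  | zero => exact hW
  | succ n ih =>
    have left_factor : StronglyMeasurable fun p : (α × ℝ) × ℝ => W p.1.1 p.2 :=
      hW.comp_measurable (g := fun p : (α × ℝ) × ℝ => (p.1.1, p.2)) (by fun_prop)
    have right_factor : StronglyMeasurable fun p : (α × ℝ) × ℝ =>
        convList (List.replicate (n + 1) (W p.1.1)) (p.1.2 - p.2) :=
      ih.comp_measurable (g := fun p : (α × ℝ) × ℝ => (p.1.1, p.1.2 - p.2)) (by fun_prop)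
    exact (left_factor.mul right_factor).integral_prod_right

/-- The map sending `f` to its convolution power with `n + 1` factors, on `L¹(ℝ)`. -/
noncomputable def convPow (n : ℕ) : C(ℝ →₁[volume] ℂ, ℝ →₁[volume] ℂ) :=
  ⟨bilinPow (convolutionL1 (ContinuousLinearMap.mul ℂ ℂ) volume) n, continuous_bilinPow _ n⟩

theorem coeFn_convPow (n : ℕ) (f : ℝ →₁[volume] ℂ) :
    convPow n f =ᵐ[volume] convList (List.replicate (n + 1) f) := by
  induction n with
  | zero => exact .rfl
  | succ n ih =>
    refine (coeFn_convolutionL1 _ f (convPow n f)).trans ?_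
    rw [convList_replicate_succ_succ, ← conv_congr .rfl ih, conv_eq_convolution]

theorem lipschitzOnWith_convPow (n : ℕ) (R : NNReal) :
    LipschitzOnWith ((n + 1) * R ^ n) (convPow n) (Metric.closedBall 0 R) := by
  refine LipschitzOnWith.of_dist_le_mul fun f hf g hg => ?_
  rw [mem_closedBall_zero_iff] at hf hg
  have norm_conv_le :
      ‖convolutionL1 (ContinuousLinearMap.mul ℂ ℂ) (volume : Measure ℝ)‖ ≤ 1 :=
    (norm_convolutionL1_le _).trans (ContinuousLinearMap.opNorm_mul_le ℂ ℂ)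
  have norm_sub_le := norm_bilinPow_sub_le norm_conv_le hf hg n
  rw [one_mul] at norm_sub_le
  rw [dist_eq_norm, dist_eq_norm]
  exact_mod_cast norm_sub_le

end ConvolutionPowers

section Boussinesq

/-- The propagator `Ŝ(t)(v₀, v₁)` as a continuous curve in `L¹(ℝ)`. -/
noncomputable def linearFlow (v₀ v₁ : ℝ →₁[volume] ℂ) : C(ℝ, ℝ →₁[volume] ℂ) where
  toFun t := multiplierCurve isLipschitzSymbol_cos volume ℂ t v₀ +
    multiplierCurve isLipschitzSymbol_mker volume ℂ t v₁

theorem norm_linearFlow_le (v₀ v₁ : ℝ →₁[volume] ℂ) {t : ℝ} (ht : |t| ≤ 1) :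
    ‖linearFlow v₀ v₁ t‖ ≤ ‖v₀‖ + ‖v₁‖ := by
  have norm_cos_le : ‖multiplierCurve isLipschitzSymbol_cos volume ℂ t‖ ≤ 1 :=
    norm_multiplierCurve_le _ zero_le_one fun ξ => Real.abs_cos_le_one _
  have norm_mker_le : ‖multiplierCurve isLipschitzSymbol_mker volume ℂ t‖ ≤ 1 :=
    norm_multiplierCurve_le _ zero_le_one fun ξ => (abs_mker_le t ξ).trans ht
  exact norm_add_le_of_le
    ((ContinuousLinearMap.le_of_opNorm_le _ norm_cos_le v₀).trans_eq (one_mul _))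
    ((ContinuousLinearMap.le_of_opNorm_le _ norm_mker_le v₁).trans_eq (one_mul _))

theorem coeFn_linearFlow {v₀ v₁ : ℝ → ℂ} (h₀ : Integrable v₀) (h₁ : Integrable v₁) (t : ℝ) :
    linearFlow (h₀.toL1 v₀) (h₁.toL1 v₁) t =ᵐ[volume] Shat t v₀ v₁ := by
  refine (Lp.coeFn_add _ _).trans ?_
  filter_upwards [coeFn_multiplierCurve isLipschitzSymbol_cos t (h₀.toL1 v₀),
    coeFn_multiplierCurve isLipschitzSymbol_mker t (h₁.toL1 v₁), h₀.coeFn_toL1, h₁.coeFn_toL1]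
    with ξ hcos hmker hv₀ hv₁
  rw [Pi.add_apply, hcos, hmker, hv₀, hv₁, Complex.real_smul, Complex.real_smul, Shat]

/-- The propagators `sin((t - t')λ)λ` of the Duhamel formula for gIBq, as operators on `L¹(ℝ)`. -/
noncomputable def duhamelKernel : C(ℝ, (ℝ →₁[volume] ℂ) →L[ℝ] (ℝ →₁[volume] ℂ)) :=
  multiplierCurve isLipschitzSymbol_sin_mul_lam volume ℂ

theorem norm_duhamelKernel_le (t : ℝ) : ‖duhamelKernel t‖ ≤ |t| :=
  norm_multiplierCurve_le isLipschitzSymbol_sin_mul_lam (abs_nonneg t) (abs_sin_mul_lam_le t)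

variable {T : ℝ}

/-- The map on `C([0, T]; L¹(ℝ))` whose fixed points are the Fourier-side solutions of gIBq with
nonlinearity `u ^ k` and data `(v₀, v₁)`. -/
noncomputable def gIBqMap (hT : 0 ≤ T) (k : ℕ) (v₀ v₁ : ℝ →₁[volume] ℂ) :
    C(Icc 0 T, ℝ →₁[volume] ℂ) → C(Icc 0 T, ℝ →₁[volume] ℂ) :=
  duhamelMap hT (linearFlow v₀ v₁) duhamelKernel (convPow (k - 1))

theorem existsUnique_gIBqMap_eq (hT : 0 ≤ T) (hT1 : T ≤ 1) {k : ℕ} (hk : 2 ≤ k) {M : ℝ}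
    (hTM : T ^ 2 * M ^ (k - 1) ≤ 1 / (k * 2 ^ k)) {v₀ v₁ : ℝ →₁[volume] ℂ}
    (hv : ‖v₀‖ + ‖v₁‖ ≤ M) : ∃! e, ‖e‖ ≤ 2 * M ∧ gIBqMap hT k v₀ v₁ e = e := by
  obtain ⟨n, rfl⟩ := Nat.exists_eq_add_of_le' hk
  have hM : 0 ≤ M := (add_nonneg (norm_nonneg _) (norm_nonneg _)).trans hv
  lift M to NNReal using hM
  let L : NNReal := ((n + 1 : ℕ) + 1) * (2 * M) ^ (n + 1)
  have contraction_const_le : T * (T * L) ≤ 1 / 2 :=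
    calc T * (T * L) = T ^ 2 * M ^ (n + 1) * ((n + 2 : ℕ) * 2 ^ (n + 1)) := by
          simp only [L]; push_cast; ring
      _ ≤ 1 / ((n + 2 : ℕ) * 2 ^ (n + 2)) * ((n + 2 : ℕ) * 2 ^ (n + 1)) := by
          gcongr
          exact hTM
      _ = 1 / 2 := by field_simp; ring
  refine existsUnique_duhamelMap_eq (L := L) hT (by positivity)
    (fun t ht => (norm_linearFlow_le v₀ v₁ ?_).trans hv)
    (fun r hr => (norm_duhamelKernel_le r).trans ?_) (bilinPow_succ_zero _ n)
    (lipschitzOnWith_convPow (n + 1) (2 * M)) ?_ ?_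
  · rw [abs_of_nonneg ht.1]
    exact ht.2.trans hT1
  · rw [abs_of_nonneg hr.1]
    exact hr.2
  · linarith [mul_le_mul_of_nonneg_right contraction_const_le (by positivity : 0 ≤ 2 * (M : ℝ))]
  · linarith

end Boussinesq

section Curves

variable {T : ℝ} {w : ℝ → ℝ → ℂ}

theorem continuousL1On_iff_continuous {e : Icc 0 T → ℝ →₁[volume] ℂ}
    (hw : ∀ t : Icc 0 T, w t =ᵐ[volume] e t) : ContinuousL1On T w ↔ Continuous e := by
  have eLpNorm_sub_eq (t t₀ : Icc 0 T) :
      eLpNorm (fun ξ => w t ξ - w t₀ ξ) 1 volume = edist (e t) (e t₀) := by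
    rw [Lp.edist_def]
    exact eLpNorm_congr_ae ((hw t).sub (hw t₀))
  simp only [ContinuousL1On, continuous_iff_continuousAt, ContinuousAt, Subtype.forall,
    tendsto_iff_edist_tendsto_0, ← eLpNorm_sub_eq]
  exact forall₂_congr fun t₀ ht₀ => tendsto_nhdsWithin_iff_subtype ht₀ _ _

theorem norm_le_iff_forall_eLpNorm_le {e : C(Icc 0 T, ℝ →₁[volume] ℂ)}
    (hw : ∀ t : Icc 0 T, w t =ᵐ[volume] e t) {R : ℝ} (hR : 0 ≤ R) :
    ‖e‖ ≤ R ↔ ∀ t ∈ Icc 0 T, eLpNorm (w t) 1 volume ≤ ENNReal.ofReal R := by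
  have eLpNorm_eq (t : Icc 0 T) : eLpNorm (w t) 1 volume = ‖e t‖ₑ := by
    rw [Lp.enorm_def, eLpNorm_congr_ae (hw t)]
  simp only [ContinuousMap.norm_le e hR, ← ENNReal.ofReal_le_ofReal_iff hR, ofReal_norm,
    ← eLpNorm_eq, Subtype.forall]

theorem exists_continuousMap_ae_eq (hw_int : ∀ t ∈ Icc 0 T, Integrable (w t))
    (hw_cont : ContinuousL1On T w) :
    ∃ e : C(Icc 0 T, ℝ →₁[volume] ℂ), ∀ t : Icc 0 T, w t =ᵐ[volume] e t := by
  let e (t : Icc 0 T) : ℝ →₁[volume] ℂ := (hw_int t t.2).toL1 (w t)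
  have hwe (t : Icc 0 T) : w t =ᵐ[volume] e t := (hw_int t t.2).coeFn_toL1.symm
  exact ⟨⟨e, (continuousL1On_iff_continuous hwe).1 hw_cont⟩, hwe⟩

theorem coeFn_duhamelKernel_convPow (n : ℕ) (r : ℝ) {f : ℝ →₁[volume] ℂ} {g : ℝ → ℂ}
    (hg : g =ᵐ[volume] f) :
    duhamelKernel r (convPow n f) =ᵐ[volume] fun ξ =>
      ((Real.sin (r * lam ξ) * lam ξ : ℝ) : ℂ) * convList (List.replicate (n + 1) g) ξ := by
  filter_upwards [coeFn_multiplierCurve isLipschitzSymbol_sin_mul_lam r (convPow n f),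
    coeFn_convPow n f, convList_replicate_ae_eq hg n] with ξ hkernel hpow hlist
  rw [duhamelKernel, hkernel, hpow, ← hlist, Complex.real_smul]

theorem coeFn_integral_duhamelKernel_ae_eq_Ihat (hT : 0 ≤ T) {k : ℕ} (hk : 2 ≤ k)
    {e : C(Icc 0 T, ℝ →₁[volume] ℂ)} (hw : ∀ t : Icc 0 T, w t =ᵐ[volume] e t) (t : Icc 0 T) :
    (∫ s in (0 : ℝ)..t, duhamelKernel (t - s) (convPow (k - 1) (e (projIcc 0 T hT s))) :
      ℝ →₁[volume] ℂ) =ᵐ[volume] Ihat k (fun _ => w) t := by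
  obtain ⟨n, rfl⟩ := Nat.exists_eq_add_of_le' hk
  obtain ⟨W, hW, hWe⟩ := exists_stronglyMeasurable_uncurry_ae_eq
    (e.continuous.comp (continuous_projIcc (h := hT))).stronglyMeasurable
  let g (s ξ : ℝ) : ℂ := ((Real.sin ((t - s) * lam ξ) * lam ξ : ℝ) : ℂ) *
    convList (List.replicate (n + 2) (W s)) ξ
  have hg : StronglyMeasurable (uncurry g) := by
    refine StronglyMeasurable.mul (Measurable.stronglyMeasurable ?_)
      (stronglyMeasurable_uncurry_convList_replicate hW (n + 1))
    fun_prop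
  have integrable_integrand :=
    (((continuous_duhamel_integrand hT duhamelKernel (convPow (n + 1)) e).uncurry_left
      (t : ℝ)).intervalIntegrable (μ := volume) 0 t).1
  have integral_ae_eq := coeFn_integral_ae_eq integrable_integrand hg.aestronglyMeasurable
    (ae_of_all _ fun s => (coeFn_duhamelKernel_convPow (n + 1) (t - s) (hWe s)).symm)
  have W_ae_eq {s : ℝ} (hs : s ∈ Ioc 0 (t : ℝ)) : W s =ᵐ[volume] w s := by
    have hsT : s ∈ Icc 0 T := ⟨hs.1.le, hs.2.trans t.2.2⟩
    refine (hWe s).trans ?_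
    rw [comp_apply, projIcc_of_mem hT hsT]
    exact (hw ⟨s, hsT⟩).symm
  rw [intervalIntegral.integral_of_le t.2.1]
  filter_upwards [integral_ae_eq] with ξ hξ
  rw [Ihat, intervalIntegral.integral_of_le t.2.1]
  refine hξ.trans (setIntegral_congr_fun measurableSet_Ioc fun s hs => ?_)
  simp only [g, List.ofFn_const, convList_replicate_congr_ae (W_ae_eq hs) n]

theorem gIBqMap_apply_ae_eq (hT : 0 ≤ T) {k : ℕ} (hk : 2 ≤ k) {v₀ v₁ : ℝ → ℂ}
    (h₀ : Integrable v₀) (h₁ : Integrable v₁) {e : C(Icc 0 T, ℝ →₁[volume] ℂ)}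
    (hw : ∀ t : Icc 0 T, w t =ᵐ[volume] e t) (t : Icc 0 T) :
    gIBqMap hT k (h₀.toL1 v₀) (h₁.toL1 v₁) e t =ᵐ[volume]
      fun ξ => Shat t v₀ v₁ ξ + Ihat k (fun _ => w) t ξ :=
  (Lp.coeFn_add _ _).trans <|
    (coeFn_linearFlow h₀ h₁ t).add (coeFn_integral_duhamelKernel_ae_eq_Ihat hT hk hw t)

theorem isGIBqSol_iff_gIBqMap_eq (hT : 0 ≤ T) {k : ℕ} (hk : 2 ≤ k) {v₀ v₁ : ℝ → ℂ}
    (h₀ : Integrable v₀) (h₁ : Integrable v₁) {e : C(Icc 0 T, ℝ →₁[volume] ℂ)}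
    (hw : ∀ t : Icc 0 T, w t =ᵐ[volume] e t) :
    IsGIBqSol k T v₀ v₁ w ↔ gIBqMap hT k (h₀.toL1 v₀) (h₁.toL1 v₁) e = e := by
  have w_ae_eq_iff (t : Icc 0 T) :
      (∀ᵐ ξ, w t ξ = Shat t v₀ v₁ ξ + Ihat k (fun _ => w) t ξ) ↔
        gIBqMap hT k (h₀.toL1 v₀) (h₁.toL1 v₁) e t = e t := by
    have hmap := gIBqMap_apply_ae_eq hT hk h₀ h₁ hw t
    rw [Lp.ext_iff]
    exact ⟨fun h => hmap.trans (EventuallyEq.trans (EventuallyEq.symm h) (hw t)),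
      fun h => (hw t).trans (h.symm.trans hmap)⟩
  have integrable_w (t : ℝ) (ht : t ∈ Icc 0 T) : Integrable (w t) :=
    (L1.integrable_coeFn _).congr (hw ⟨t, ht⟩).symm
  rw [ContinuousMap.ext_iff]
  exact ⟨fun h t => (w_ae_eq_iff t).1 (h.2.2 t t.2), fun h =>
    ⟨integrable_w, (continuousL1On_iff_continuous hw).2 e.continuous,
      fun t ht => (w_ae_eq_iff ⟨t, ht⟩).2 (h ⟨t, ht⟩)⟩⟩

theorem norm_toL1_add_norm_toL1_le {v₀ v₁ : ℝ → ℂ} (h₀ : Integrable v₀) (h₁ : Integrable v₁)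
    {M : ℝ} (hM : 0 ≤ M)
    (h : eLpNorm v₀ 1 volume + eLpNorm v₁ 1 volume ≤ ENNReal.ofReal M) :
    ‖h₀.toL1 v₀‖ + ‖h₁.toL1 v₁‖ ≤ M := by
  rw [← ENNReal.ofReal_le_ofReal_iff hM, ENNReal.ofReal_add (norm_nonneg _) (norm_nonneg _),
    ofReal_norm, ofReal_norm, Integrable.enorm_toL1, Integrable.enorm_toL1,
    ← eLpNorm_one_eq_lintegral_enorm, ← eLpNorm_one_eq_lintegral_enorm]
  exact h

end Curves

/-- Local well-posedness of gIBq in the Wiener algebra `FL¹`. -/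
theorem local_wellposedness_FL1 (k : ℕ) (hk : 2 ≤ k) :
    ∃ c : ℝ, 0 < c ∧
      ∀ M : ℝ, 0 < M →
        ∀ T : ℝ, 0 < T → T ≤ 1 → T ^ 2 * M ^ (k - 1) ≤ c →
          ∀ v₀ v₁ : ℝ → ℂ, Integrable v₀ → Integrable v₁ →
            eLpNorm v₀ 1 volume + eLpNorm v₁ 1 volume ≤ ENNReal.ofReal M →
            ∃ v : ℝ → ℝ → ℂ, IsGIBqSol k T v₀ v₁ v ∧
              (∀ t ∈ Set.Icc (0 : ℝ) T, eLpNorm (v t) 1 volume ≤ ENNReal.ofReal (2 * M)) ∧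
              ∀ w : ℝ → ℝ → ℂ, IsGIBqSol k T v₀ v₁ w →
                (∀ t ∈ Set.Icc (0 : ℝ) T, eLpNorm (w t) 1 volume ≤ ENNReal.ofReal (2 * M)) →
                ∀ t ∈ Set.Icc (0 : ℝ) T, w t =ᵐ[volume] v t := by
  refine ⟨1 / (k * 2 ^ k), by positivity, fun M hM T hT hT1 hTM v₀ v₁ h₀ h₁ hv => ?_⟩
  have norm_data_le := norm_toL1_add_norm_toL1_le h₀ h₁ hM.le hv
  obtain ⟨e, ⟨norm_e_le, he⟩, e_unique⟩ := existsUnique_gIBqMap_eq hT.le hT1 hk hTM norm_data_le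
  let v (t : ℝ) : ℝ → ℂ := e (projIcc 0 T hT.le t)
  have hve (t : Icc 0 T) : v t =ᵐ[volume] e t := by
    simp only [v, projIcc_val, EventuallyEq.rfl]
  have hR : 0 ≤ 2 * M := by positivity
  refine ⟨v, (isGIBqSol_iff_gIBqMap_eq hT.le hk h₀ h₁ hve).2 he,
    (norm_le_iff_forall_eLpNorm_le hve hR).1 norm_e_le, fun w hw hw_bound t ht => ?_⟩
  obtain ⟨e', hwe'⟩ := exists_continuousMap_ae_eq hw.1 hw.2.1
  have e'_eq : e' = e := e_unique e' ⟨(norm_le_iff_forall_eLpNorm_le hwe' hR).2 hw_bound,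
    (isGIBqSol_iff_gIBqMap_eq hT.le hk h₀ h₁ hwe').1 hw⟩
  exact (e'_eq ▸ hwe' ⟨t, ht⟩).trans (hve ⟨t, ht⟩).symm
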